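/- Let v ∈ C²([0,L];ℝ³) and d₂, d₃ ∈ C¹([0,L];ℝ³) be such that R(s) := (v′(s)|d₂(s)|d₃(s)) ∈ SO(3) for every s ∈ [0,L], and let q ∈ C¹([0,L];ℝ³) and β ∈ C¹(cl Ω;ℝ³). For h > 0 define v⁽ʰ⁾ : Ω → ℝ³ by v⁽ʰ⁾(s,ξ,ζ) := v(s) + hξd₂(s) + hζd₃(s) + hq(s) + h²β(s,ξ,ζ). Then lim_{h→0⁺} (1/h²) ∫_Ω W(s,ξ,ζ, (∇_h v⁽ʰ⁾)(∇_hΨ⁽ʰ⁾)⁻¹) det(∇_hΨ⁽ʰ⁾) ds dξ dζ = ½ ∫_Ω Q₃(s,ξ,ζ, G_{q,β}(s,ξ,ζ)) ds dξ dζ, where G_{q,β}(s,ξ,ζ) := R₀(s) [ (R(s)ᵀR′(s) − R₀(s)ᵀR₀′(s))(0,ξ,ζ)ᵀ + R(s)ᵀq′(s) | R(s)ᵀ∂_ξβ(s,ξ,ζ) | R(s)ᵀ∂_ζβ(s,ξ,ζ) ] R₀(s)ᵀ, the matrix in square brackets having the three displayed vectors as its columns. -/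

import Mathlib

open MeasureTheory Set

noncomputable section

abbrev M3 : Type := Matrix (Fin 3) (Fin 3) ℝ

/-- The special orthogonal group `SO(3)` as a set of `3 × 3` real matrices. -/
def SO3 : Set M3 := {R : M3 | R.transpose * R = 1 ∧ R.det = 1}

/-- The Frobenius norm of a `3 × 3` real matrix. -/
def frob3 (F : M3) : ℝ := Real.sqrt (∑ i, ∑ j, (F i j) ^ 2)

/-- The Frobenius distance from a matrix to `SO(3)`. -/
def distSO3 (F : M3) : ℝ := sInf ((fun R => frob3 (F - R)) '' SO3)

/-- The Euclidean norm on `ℝ³`. -/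
def enorm3 (v : Fin 3 → ℝ) : ℝ := Real.sqrt (∑ i, (v i) ^ 2)

/-- The `3 × 3` matrix with the three given columns. -/
def colMat (a b c : Fin 3 → ℝ) : M3 :=
  Matrix.of fun i j => if j = 0 then a i else if j = 1 then b i else c i

/-- `a ⊗ e₁` : the `3 × 3` matrix whose first column is `a` and whose other columns vanish. -/
def tensE1 (a : Fin 3 → ℝ) : M3 := Matrix.of fun i j => if j = 0 then a i else 0

/-- The normal vector `ν₂(s) = R₀(s) e₂`. -/
def nu2 (R₀ : ℝ → M3) (s : ℝ) : Fin 3 → ℝ := (R₀ s).mulVec (Pi.single 1 1)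

/-- The normal vector `ν₃(s) = R₀(s) e₃`. -/
def nu3 (R₀ : ℝ → M3) (s : ℝ) : Fin 3 → ℝ := (R₀ s).mulVec (Pi.single 2 1)

/-- The parametrization `Ψ⁽ʰ⁾(s,ξ,ζ) = γ(s) + hξν₂(s) + hζν₃(s)` of the thin beam. -/
def Psih (γ : ℝ → Fin 3 → ℝ) (R₀ : ℝ → M3) (h : ℝ) (p : ℝ × ℝ × ℝ) : Fin 3 → ℝ :=
  γ p.1 + (h * p.2.1) • nu2 R₀ p.1 + (h * p.2.2) • nu3 R₀ p.1

/-- The scaled gradient `∇_h z = (∂_s z | h⁻¹ ∂_ξ z | h⁻¹ ∂_ζ z)` as a `3 × 3` matrix. -/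
def scaledGrad (h : ℝ) (z : ℝ × ℝ × ℝ → Fin 3 → ℝ) (p : ℝ × ℝ × ℝ) : M3 :=
  Matrix.of fun i j =>
    if j = 0 then deriv (fun t => z (t, p.2.1, p.2.2) i) p.1
    else if j = 1 then h⁻¹ * deriv (fun t => z (p.1, t, p.2.2) i) p.2.1
    else h⁻¹ * deriv (fun t => z (p.1, p.2.1, t) i) p.2.2

attribute [local instance] Matrix.frobeniusNormedAddCommGroup Matrix.frobeniusNormedSpace

/-- Twice the quadratic form of linearized elasticity:
`Q₃(z,G) = ∂²W/∂F²(z,Id)[G,G]`. -/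
def Q3 (W : ℝ × ℝ × ℝ → M3 → ℝ) (z : ℝ × ℝ × ℝ) (G : M3) : ℝ :=
  iteratedFDeriv ℝ 2 (W z) 1 ![G, G]

/-- The recovery sequence `v⁽ʰ⁾(s,ξ,ζ) = v(s) + hξd₂(s) + hζd₃(s) + hq(s) + h²β(s,ξ,ζ)`. -/
def vh8 (v d₂ d₃ q : ℝ → Fin 3 → ℝ) (β : ℝ × ℝ × ℝ → Fin 3 → ℝ) (h : ℝ)
    (p : ℝ × ℝ × ℝ) : Fin 3 → ℝ :=
  v p.1 + (h * p.2.1) • d₂ p.1 + (h * p.2.2) • d₃ p.1 + h • q p.1 + (h ^ 2) • β p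

/-- The frame `R(s) = (v′(s)|d₂(s)|d₃(s))`. -/
def Rmat (v d₂ d₃ : ℝ → Fin 3 → ℝ) (s : ℝ) : M3 := colMat (deriv v s) (d₂ s) (d₃ s)

/-- The derivative `R′(s) = (v″(s)|d₂′(s)|d₃′(s))`. -/
def Rmat' (v d₂ d₃ : ℝ → Fin 3 → ℝ) (s : ℝ) : M3 :=
  colMat (deriv (deriv v) s) (deriv d₂ s) (deriv d₃ s)

/-- The entrywise derivative `R₀′(s)`. -/
def R0' (R₀ : ℝ → M3) (s : ℝ) : M3 := Matrix.of fun i j => deriv (fun t => R₀ t i j) s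

/-- The matrix field `G_{q,β}` appearing in the limiting energy. -/
def Gqb (R₀ : ℝ → M3) (v d₂ d₃ q : ℝ → Fin 3 → ℝ) (β : ℝ × ℝ × ℝ → Fin 3 → ℝ)
    (p : ℝ × ℝ × ℝ) : M3 :=
  R₀ p.1 *
    colMat
      (((Rmat v d₂ d₃ p.1).transpose * Rmat' v d₂ d₃ p.1 -
          (R₀ p.1).transpose * R0' R₀ p.1).mulVec ![0, p.2.1, p.2.2] +
        (Rmat v d₂ d₃ p.1).transpose.mulVec (deriv q p.1))
      ((Rmat v d₂ d₃ p.1).transpose.mulVec (deriv (fun t => β (p.1, t, p.2.2)) p.2.1))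
      ((Rmat v d₂ d₃ p.1).transpose.mulVec (deriv (fun t => β (p.1, p.2.1, t)) p.2.2)) *
    (R₀ p.1).transpose

/-!
Write `R` for the frame of the limit deformation. Left multiplication by the rotation `R₀Rᵀ` does
not change the energy density and turns `∇_h v⁽ʰ⁾ (∇_h Ψ⁽ʰ⁾)⁻¹` into `Id + h E_h`, where `E_h` is
uniformly bounded and converges pointwise to `G_{q,β}`. Since `W ≥ 0` vanishes at `Id`, so does its
first derivative there, and a second-order Taylor expansion with Lagrange remainder shows both that
`h⁻² W(Id + h E_h)` is bounded and that it tends to `½ Q₃(G_{q,β})`. As `det ∇_h Ψ⁽ʰ⁾ → det R₀ = 1`,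
dominated convergence gives the limit of the energies.
-/

open Filter Topology Metric

section Taylor

variable {V : Type*} [NormedAddCommGroup V] [NormedSpace ℝ V] {f : V → ℝ} {x K : V}

lemma iteratedDeriv_two_comp_add_smul {t : ℝ} (hf : ContDiffAt ℝ 2 f (x + t • K)) :
    iteratedDeriv 2 (fun t : ℝ => f (x + t • K)) t =
      iteratedFDeriv ℝ 2 f (x + t • K) ![K, K] := by
  have hline : deriv (fun t : ℝ => x + t • K) = fun _ => K := by
    ext1 t
    simpa using (((hasDerivAt_id t).smul_const K).const_add x).deriv
  have hcomp := iteratedDeriv_vcomp_two (f := fun t : ℝ => x + t • K) hf (by fun_prop)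
  simp only [iteratedDeriv_succ, iteratedDeriv_zero, hline, deriv_const, map_zero,
    add_zero] at hcomp
  simp only [iteratedDeriv_succ, iteratedDeriv_zero]
  rw [← Function.comp_def f, hcomp, iteratedFDeriv_two_apply, iteratedFDeriv_two_apply]
  rfl

lemma exists_mem_segment_taylor_two (hf : ∀ y ∈ segment ℝ x (x + K), ContDiffAt ℝ 2 f y) :
    ∃ y ∈ segment ℝ x (x + K),
      f (x + K) - f x - fderiv ℝ f x K = 1 / 2 * iteratedFDeriv ℝ 2 f y ![K, K] := by
  have hmem {t : ℝ} (ht : t ∈ uIcc 0 1) : x + t • K ∈ segment ℝ x (x + K) := by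
    rw [segment_eq_image']
    exact ⟨t, by rwa [uIcc_of_le zero_le_one] at ht, by simp⟩
  have hg : ContDiffOn ℝ (1 + 1) (fun t : ℝ => f (x + t • K)) (uIcc 0 1) := fun t ht =>
    ((hf _ (hmem ht)).comp t (by fun_prop)).contDiffWithinAt
  have hg' : derivWithin (fun t : ℝ => f (x + t • K)) (uIcc 0 1) 0 = fderiv ℝ f x K := by
    have hfx : HasFDerivAt f (fderiv ℝ f x) (x + (0 : ℝ) • K) := by
      simpa using ((hf x (left_mem_segment ℝ _ _)).differentiableAt two_ne_zero).hasFDerivAt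
    have hline : HasDerivAt (fun t : ℝ => x + t • K) K 0 := by
      simpa using ((hasDerivAt_id (0 : ℝ)).smul_const K).const_add x
    exact (hfx.comp_hasDerivAt 0 hline).hasDerivWithinAt.derivWithin
      (uniqueDiffOn_uIcc zero_ne_one 0 left_mem_uIcc)
  obtain ⟨t, ht, htaylor⟩ := taylor_mean_remainder_lagrange_iteratedDeriv zero_ne_one hg
  have ht' : t ∈ uIcc (0 : ℝ) 1 := uIoo_subset_uIcc_self ht
  refine ⟨x + t • K, hmem ht', ?_⟩
  have hpoly : taylorWithinEval (fun t : ℝ => f (x + t • K)) 1 (uIcc 0 1) 0 1 =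
      f x + fderiv ℝ f x K :=
    (taylorWithinEval_succ _ 0 _ _ _).trans (by simp [iteratedDerivWithin_one, ← hg'])
  rw [hpoly, show 1 + 1 = 2 from rfl, iteratedDeriv_two_comp_add_smul (hf _ (hmem ht'))] at htaylor
  norm_num at htaylor
  linarith

lemma segment_self_add_subset_closedBall : segment ℝ x (x + K) ⊆ closedBall x ‖K‖ := by
  simpa using segment_subset_closedBall_left x (x + K)

lemma abs_sub_sub_fderiv_le_of_iteratedFDeriv_two_le {r C : ℝ}
    (hf : ContDiffOn ℝ 2 f (ball x r))
    (hC : ∀ y ∈ ball x r, ∀ G, |iteratedFDeriv ℝ 2 f y ![G, G]| ≤ C * ‖G‖ ^ 2) (hK : ‖K‖ < r) :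
    |f (x + K) - f x - fderiv ℝ f x K| ≤ C / 2 * ‖K‖ ^ 2 := by
  have hseg : segment ℝ x (x + K) ⊆ ball x r :=
    segment_self_add_subset_closedBall.trans (closedBall_subset_ball hK)
  obtain ⟨y, hy, htaylor⟩ := exists_mem_segment_taylor_two (f := f) (K := K) fun y hy =>
    hf.contDiffAt (isOpen_ball.mem_nhds (hseg hy))
  rw [htaylor, abs_mul, abs_of_pos (by norm_num : (0 : ℝ) < 1 / 2)]
  linarith [hC y (hseg hy) K]

lemma tendsto_second_difference_quotient (hf : ContDiffAt ℝ 2 f x) {E : ℝ → V} {G : V}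
    (hE : Tendsto E (𝓝[≠] 0) (𝓝 G)) :
    Tendsto (fun h : ℝ => 1 / h ^ 2 * (f (x + h • E h) - f x - fderiv ℝ f x (h • E h))) (𝓝[≠] 0)
      (𝓝 (1 / 2 * iteratedFDeriv ℝ 2 f x ![G, G])) := by
  have hK : Tendsto (fun h : ℝ => h • E h) (𝓝[≠] 0) (𝓝 0) := by
    simpa using (tendsto_id.mono_left nhdsWithin_le_nhds).smul hE
  obtain ⟨r, hr, hfr⟩ := eventually_nhds_iff_ball.1 (hf.eventually (by simp))
  have hsmall : ∀ᶠ h in 𝓝[≠] (0 : ℝ), ‖h • E h‖ < r := by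
    simpa using hK.norm.eventually_lt_const (by simpa using hr)
  choose! y hy htaylor using fun h (hh : ‖h • E h‖ < r) =>
    exists_mem_segment_taylor_two (f := f) (x := x) (K := h • E h) fun y hy =>
      hfr y (closedBall_subset_ball hh (segment_self_add_subset_closedBall hy))
  have hyx : Tendsto y (𝓝[≠] 0) (𝓝 x) := by
    refine tendsto_iff_dist_tendsto_zero.2 (squeeze_zero' (.of_forall fun _ => dist_nonneg)
      (hsmall.mono fun h hh => segment_self_add_subset_closedBall (hy h hh)) ?_)
    simpa using hK.norm
  have hD2 : Tendsto (fun h => iteratedFDeriv ℝ 2 f (y h) ![E h, E h]) (𝓝[≠] 0)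
      (𝓝 (iteratedFDeriv ℝ 2 f x ![G, G])) :=
    ((hf.iteratedFDeriv_right (m := 0) le_rfl).continuousAt.tendsto.comp hyx).eval
      (tendsto_pi_nhds.2 (by simp [Fin.forall_fin_two, hE]))
  refine (hD2.const_mul (1 / 2)).congr' ?_
  filter_upwards [hsmall, self_mem_nhdsWithin] with h hh (hne : h ≠ 0)
  have hsq : iteratedFDeriv ℝ 2 f (y h) ![h • E h, h • E h] =
      h ^ 2 * iteratedFDeriv ℝ 2 f (y h) ![E h, E h] := by
    simp [iteratedFDeriv_two_apply, pow_two, mul_assoc]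
  rw [htaylor h hh, hsq]
  field_simp

end Taylor

section EnergyIntegral

variable {X : Type*} [MeasurableSpace X] {μ : Measure X}

/-- `f` is an almost everywhere limit of simple functions `fₙ`, and `x ↦ W x (fₙ x)` is measurable
because `fₙ` takes finitely many values. -/
lemma aestronglyMeasurable_apply_of_continuousAt {V Y : Type*} [TopologicalSpace V]
    [TopologicalSpace Y] [TopologicalSpace.PseudoMetrizableSpace Y] [SecondCountableTopology Y]
    [MeasurableSpace Y] [BorelSpace Y] {W : X → V → Y} {f : X → V}
    (hW : ∀ F, Measurable fun x => W x F) (hf : AEStronglyMeasurable f μ)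
    (hcont : ∀ᵐ x ∂μ, ContinuousAt (W x) (f x)) :
    AEStronglyMeasurable (fun x => W x (f x)) μ := by
  have hmk := hf.stronglyMeasurable_mk
  refine aestronglyMeasurable_of_tendsto_ae atTop (f := fun n x => W x (hmk.approx n x))
    (fun n => (SimpleFunc.measurable_bind _ (fun F x => W x F) hW).aestronglyMeasurable) ?_
  filter_upwards [hcont, hf.ae_eq_mk] with x hx hfx
  exact hx.tendsto.comp (hfx ▸ hmk.tendsto_approx x)

variable {V : Type*} [NormedAddCommGroup V] [NormedSpace ℝ V]

lemma eventually_ae_norm_smul_lt {E : ℝ → X → V} {M δ : ℝ} (hδ : 0 < δ)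
    (hEM : ∀ᶠ h in 𝓝[≠] 0, ∀ᵐ x ∂μ, ‖E h x‖ ≤ M) :
    ∀ᶠ h in 𝓝[≠] 0, ∀ᵐ x ∂μ, ‖h • E h x‖ < δ := by
  have hsmall : ∀ᶠ h in 𝓝[≠] (0 : ℝ), |h| * M < δ := by
    have hcont : Continuous fun h : ℝ => |h| * M := by fun_prop
    exact ((hcont.tendsto' 0 0 (by simp)).eventually_lt_const hδ).filter_mono nhdsWithin_le_nhds
  filter_upwards [hEM, hsmall] with h hM hh
  filter_upwards [hM] with x hx
  rw [norm_smul, Real.norm_eq_abs]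
  exact (mul_le_mul_of_nonneg_left hx (abs_nonneg h)).trans_lt hh

theorem tendsto_integral_rescaled_energy [IsFiniteMeasure μ] {W : X → V → ℝ} {x₀ : V}
    {δ C M N : ℝ} (hδ : 0 < δ) (hC : 0 ≤ C) (hWmeas : ∀ F, Measurable fun x => W x F)
    (hWC2 : ∀ᵐ x ∂μ, ContDiffOn ℝ 2 (W x) (ball x₀ δ))
    (hWbound : ∀ᵐ x ∂μ, ∀ F ∈ ball x₀ δ, ∀ G, |iteratedFDeriv ℝ 2 (W x) F ![G, G]| ≤ C * ‖G‖ ^ 2)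
    (hW0 : ∀ᵐ x ∂μ, W x x₀ = 0) (hW1 : ∀ᵐ x ∂μ, fderiv ℝ (W x) x₀ = 0)
    {E : ℝ → X → V} {E₀ : X → V} {J : ℝ → X → ℝ} {J₀ : X → ℝ}
    (hEmeas : ∀ᶠ h in 𝓝[≠] 0, AEStronglyMeasurable (E h) μ)
    (hEM : ∀ᶠ h in 𝓝[≠] 0, ∀ᵐ x ∂μ, ‖E h x‖ ≤ M)
    (hElim : ∀ᵐ x ∂μ, Tendsto (E · x) (𝓝[≠] 0) (𝓝 (E₀ x)))
    (hJmeas : ∀ᶠ h in 𝓝[≠] 0, AEStronglyMeasurable (J h) μ)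
    (hJN : ∀ᶠ h in 𝓝[≠] 0, ∀ᵐ x ∂μ, |J h x| ≤ N)
    (hJlim : ∀ᵐ x ∂μ, Tendsto (J · x) (𝓝[≠] 0) (𝓝 (J₀ x))) :
    Tendsto (fun h : ℝ => 1 / h ^ 2 * ∫ x, W x (x₀ + h • E h x) * J h x ∂μ) (𝓝[≠] 0)
      (𝓝 (1 / 2 * ∫ x, iteratedFDeriv ℝ 2 (W x) x₀ ![E₀ x, E₀ x] * J₀ x ∂μ)) := by
  simp only [← integral_const_mul, ← mul_assoc]
  refine tendsto_integral_filter_of_dominated_convergence (fun _ => C / 2 * M ^ 2 * N) ?_ ?_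
    (integrable_const _) ?_
  · filter_upwards [hEmeas, hJmeas, eventually_ae_norm_smul_lt hδ hEM] with h hE hJ hlt
    refine ((aestronglyMeasurable_apply_of_continuousAt hWmeas
      (aestronglyMeasurable_const.add (hE.const_smul h)) ?_).const_mul _).mul hJ
    filter_upwards [hWC2, hlt] with x hx hlt
    exact hx.continuousOn.continuousAt (isOpen_ball.mem_nhds (by simpa using hlt))
  · filter_upwards [hEM, hJN, eventually_ae_norm_smul_lt hδ hEM, self_mem_nhdsWithin]
      with h hEM hJN hlt (hne : h ≠ 0)
    filter_upwards [hEM, hJN, hlt, hWC2, hWbound, hW0, hW1] with x hEM hJN hlt hC2 hbound h0 h1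
    have hW : |W x (x₀ + h • E h x)| ≤ C / 2 * ‖h • E h x‖ ^ 2 := by
      simpa [h0, h1] using abs_sub_sub_fderiv_le_of_iteratedFDeriv_two_le hC2 hbound hlt
    have hquot : |1 / h ^ 2 * W x (x₀ + h • E h x)| ≤ C / 2 * M ^ 2 :=
      calc |1 / h ^ 2 * W x (x₀ + h • E h x)|
          = 1 / h ^ 2 * |W x (x₀ + h • E h x)| := by rw [abs_mul, abs_of_nonneg (by positivity)]
        _ ≤ 1 / h ^ 2 * (C / 2 * ‖h • E h x‖ ^ 2) := by gcongr
        _ = C / 2 * ‖E h x‖ ^ 2 := by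
          rw [norm_smul, mul_pow, Real.norm_eq_abs, sq_abs]
          field_simp
        _ ≤ C / 2 * M ^ 2 := by gcongr
    rw [Real.norm_eq_abs, abs_mul]
    gcongr
  · filter_upwards [hElim, hJlim, hWC2, hW0, hW1] with x hE hJ hC2 h0 h1
    have hquot := tendsto_second_difference_quotient (hC2.contDiffAt (ball_mem_nhds x₀ hδ)) hE
    simpa [h0, h1] using hquot.mul hJ

end EnergyIntegral

lemma exists_eventually_forall_norm_le_of_isCompact {T X V : Type*} [TopologicalSpace T]
    [TopologicalSpace X] [SeminormedAddCommGroup V] {K : Set X} (hK : IsCompact K) {f : T × X → V}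
    {t : T} (hf : ∀ x ∈ K, ContinuousAt f (t, x)) :
    ∃ M, ∀ᶠ s in 𝓝 t, ∀ x ∈ K, ‖f (s, x)‖ ≤ M := by
  have hcont : ContinuousOn (fun x => f (t, x)) K := fun x hx =>
    ((hf x hx).comp (f := fun x => (t, x)) (by fun_prop)).continuousWithinAt
  obtain ⟨M, hM⟩ := hK.exists_bound_of_continuousOn hcont
  refine ⟨M + 1, hK.eventually_forall_of_forall_eventually fun x hx => ?_⟩
  exact ((hf x hx).norm.eventually_lt_const (by linarith [hM x hx])).mono fun _ => le_of_lt

open scoped Matrix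

lemma mul_add_smul_mul_nonsing_inv {n α : Type*} [Fintype n] [DecidableEq n] [CommRing α]
    {Q R S A P : Matrix n n α} {h : α} (hQR : Q * R = S) (hdet : IsUnit (S + h • P).det) :
    Q * ((R + h • A) * (S + h • P)⁻¹) = 1 + h • ((Q * A - P) * (S + h • P)⁻¹) := by
  calc Q * ((R + h • A) * (S + h • P)⁻¹)
      = (S + h • P + h • (Q * A - P)) * (S + h • P)⁻¹ := by
        rw [← mul_assoc, mul_add, hQR, mul_smul_comm, smul_sub]
        abel
    _ = 1 + h • ((Q * A - P) * (S + h • P)⁻¹) := by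
        rw [add_mul, Matrix.mul_nonsing_inv _ hdet, smul_mul_assoc]

section SpecialOrthogonal

variable {R S : M3}

lemma one_mem_SO3 : (1 : M3) ∈ SO3 := by simp [SO3]

lemma mul_transpose_self_of_mem_SO3 (hR : R ∈ SO3) : R * Rᵀ = 1 :=
  mul_eq_one_comm.1 hR.1

lemma mul_transpose_mem_SO3 (hR : R ∈ SO3) (hS : S ∈ SO3) : R * Sᵀ ∈ SO3 := by
  constructor
  · rw [Matrix.transpose_mul, Matrix.transpose_transpose, mul_assoc, ← mul_assoc Rᵀ, hR.1,
      one_mul, mul_transpose_self_of_mem_SO3 hS]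
  · rw [Matrix.det_mul, Matrix.det_transpose, hR.2, hS.2, one_mul]

lemma isClosed_SO3 : IsClosed SO3 :=
  (isClosed_eq (continuous_id.matrix_transpose.matrix_mul continuous_id) continuous_const).inter
    (isClosed_eq continuous_id.matrix_det continuous_const)

lemma frob3_eq_norm (F : M3) : frob3 F = ‖F‖ := by
  simp [Matrix.frobenius_norm_def, frob3, Real.sqrt_eq_rpow]

lemma ball_one_subset_setOf_distSO3_lt (δ : ℝ) : ball (1 : M3) δ ⊆ {F | distSO3 F < δ} := by
  intro F hF
  have hbdd : BddBelow ((fun R => frob3 (F - R)) '' SO3) :=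
    ⟨0, by rintro _ ⟨R, -, rfl⟩; exact Real.sqrt_nonneg _⟩
  refine (csInf_le hbdd ⟨1, one_mem_SO3, rfl⟩).trans_lt ?_
  simpa only [frob3_eq_norm, ← dist_eq_norm, ← mem_ball] using hF

end SpecialOrthogonal

section Columns

variable (a b c a' b' c' : Fin 3 → ℝ) (x y z : ℝ) (M : M3)

lemma colMat_add_colMat :
    colMat a b c + colMat a' b' c' = colMat (a + a') (b + b') (c + c') := by
  ext i j; fin_cases j <;> simp [colMat]

lemma colMat_sub_colMat :
    colMat a b c - colMat a' b' c' = colMat (a - a') (b - b') (c - c') := by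
  ext i j; fin_cases j <;> simp [colMat]

lemma smul_colMat : x • colMat a b c = colMat (x • a) (x • b) (x • c) := by
  ext i j; fin_cases j <;> simp [colMat]

lemma mul_colMat : M * colMat a b c = colMat (M *ᵥ a) (M *ᵥ b) (M *ᵥ c) := by
  ext i j; fin_cases j <;> simp [colMat, Matrix.mul_apply, Matrix.mulVec, dotProduct]

lemma colMat_mulVec : colMat a b c *ᵥ ![x, y, z] = x • a + y • b + z • c := by
  ext i
  simp [colMat, Matrix.mulVec, dotProduct, Fin.sum_univ_three, mul_comm]

lemma colMat_mulVec_single :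
    colMat (M *ᵥ Pi.single 0 1) (M *ᵥ Pi.single 1 1) (M *ᵥ Pi.single 2 1) = M := by
  ext i j; fin_cases j <;> simp [colMat]

end Columns

lemma continuous_colMat {T : Type*} [TopologicalSpace T] {a b c : T → Fin 3 → ℝ}
    (ha : Continuous a) (hb : Continuous b) (hc : Continuous c) :
    Continuous fun t => colMat (a t) (b t) (c t) := by
  refine continuous_matrix fun i j => ?_
  simp only [colMat, Matrix.of_apply]
  split_ifs <;> fun_prop

section Gradients

variable {h : ℝ} {p : ℝ × ℝ × ℝ}

lemma scaledGrad_eq_colMat {z : ℝ × ℝ × ℝ → Fin 3 → ℝ} {a b c : Fin 3 → ℝ}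
    (ha : HasDerivAt (fun t => z (t, p.2.1, p.2.2)) a p.1)
    (hb : HasDerivAt (fun t => z (p.1, t, p.2.2)) b p.2.1)
    (hc : HasDerivAt (fun t => z (p.1, p.2.1, t)) c p.2.2) :
    scaledGrad h z p = colMat a (h⁻¹ • b) (h⁻¹ • c) := by
  ext i j
  fin_cases j <;>
    simp [scaledGrad, colMat, (hasDerivAt_pi.1 ha i).deriv, (hasDerivAt_pi.1 hb i).deriv,
      (hasDerivAt_pi.1 hc i).deriv]

lemma hasDerivAt_mulVec {R₀ : ℝ → M3} {s : ℝ} (hR₀ : ∀ i j, DifferentiableAt ℝ (R₀ · i j) s)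
    (w : Fin 3 → ℝ) : HasDerivAt (fun t => R₀ t *ᵥ w) (R0' R₀ s *ᵥ w) s :=
  hasDerivAt_pi.2 fun i => by
    simpa only [Matrix.mulVec, dotProduct, R0', Matrix.of_apply] using
      HasDerivAt.fun_sum fun j _ => (hR₀ i j).hasDerivAt.mul_const (w j)

section Partial

variable {F : Type*} [NormedAddCommGroup F] [NormedSpace ℝ F] {β : ℝ × ℝ × ℝ → F}

lemma hasDerivAt_partial_one (hβ : DifferentiableAt ℝ β p) :
    HasDerivAt (fun t => β (t, p.2.1, p.2.2)) (fderiv ℝ β p (1, 0, 0)) p.1 :=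
  hβ.hasFDerivAt.comp_hasDerivAt p.1 ((hasDerivAt_id _).prodMk (hasDerivAt_const _ _))

lemma hasDerivAt_partial_two (hβ : DifferentiableAt ℝ β p) :
    HasDerivAt (fun t => β (p.1, t, p.2.2)) (fderiv ℝ β p (0, 1, 0)) p.2.1 :=
  hβ.hasFDerivAt.comp_hasDerivAt p.2.1
    ((hasDerivAt_const _ _).prodMk ((hasDerivAt_id _).prodMk (hasDerivAt_const _ _)))

lemma hasDerivAt_partial_three (hβ : DifferentiableAt ℝ β p) :
    HasDerivAt (fun t => β (p.1, p.2.1, t)) (fderiv ℝ β p (0, 0, 1)) p.2.2 :=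
  hβ.hasFDerivAt.comp_hasDerivAt p.2.2
    ((hasDerivAt_const _ _).prodMk ((hasDerivAt_const _ _).prodMk (hasDerivAt_id _)))

end Partial

/-- The first-order part `R₀′(s)(0,ξ,ζ)ᵀ ⊗ e₁` of the scaled gradient of the beam parametrization
`Ψ⁽ʰ⁾`, whose zeroth-order part is `R₀`. -/
def beamCorrector (R₀ : ℝ → M3) (p : ℝ × ℝ × ℝ) : M3 :=
  colMat (R0' R₀ p.1 *ᵥ ![0, p.2.1, p.2.2]) 0 0

/-- The scaled gradient `∇_h Ψ⁽ʰ⁾` of the beam parametrization, in a form that makes sense up to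
`h = 0`. -/
def beamGradient (R₀ : ℝ → M3) (h : ℝ) (p : ℝ × ℝ × ℝ) : M3 := R₀ p.1 + h • beamCorrector R₀ p

/-- The quotient `h⁻¹(∇_h v⁽ʰ⁾ − R)` for the recovery sequence `v⁽ʰ⁾`, in a form that makes sense,
and is continuous in `h`, up to `h = 0`. -/
def recoveryCorrector (d₂ d₃ q : ℝ → Fin 3 → ℝ) (β : ℝ × ℝ × ℝ → Fin 3 → ℝ) (h : ℝ)
    (p : ℝ × ℝ × ℝ) : M3 :=
  colMat (p.2.1 • deriv d₂ p.1 + p.2.2 • deriv d₃ p.1 + deriv q p.1 + h • fderiv ℝ β p (1, 0, 0))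
    (fderiv ℝ β p (0, 1, 0)) (fderiv ℝ β p (0, 0, 1))

lemma scaledGrad_Psih {γ : ℝ → Fin 3 → ℝ} {R₀ : ℝ → M3} (hh : h ≠ 0)
    (hγ : DifferentiableAt ℝ γ p.1) (hR₀ : ∀ i j, DifferentiableAt ℝ (R₀ · i j) p.1)
    (hR₀e1 : R₀ p.1 *ᵥ Pi.single 0 1 = deriv γ p.1) :
    scaledGrad h (Psih γ R₀ h) p = beamGradient R₀ h p := by
  have hs : HasDerivAt (fun t => Psih γ R₀ h (t, p.2.1, p.2.2))
      (R₀ p.1 *ᵥ Pi.single 0 1 + h • (R0' R₀ p.1 *ᵥ ![0, p.2.1, p.2.2])) p.1 := by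
    have hvec : ![0, p.2.1, p.2.2] = p.2.1 • Pi.single 1 1 + p.2.2 • Pi.single 2 (1 : ℝ) := by
      ext i; fin_cases i <;> simp
    have hsum := (hγ.hasDerivAt.add
      ((hasDerivAt_mulVec hR₀ (Pi.single 1 1)).const_smul (h * p.2.1))).add
        ((hasDerivAt_mulVec hR₀ (Pi.single 2 1)).const_smul (h * p.2.2))
    refine hsum.congr_deriv ?_
    rw [hR₀e1, hvec, Matrix.mulVec_add, Matrix.mulVec_smul, Matrix.mulVec_smul]
    module
  have hξ : HasDerivAt (fun t => Psih γ R₀ h (p.1, t, p.2.2)) (h • nu2 R₀ p.1) p.2.1 := by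
    simpa [Psih] using ((((hasDerivAt_id p.2.1).const_mul h).smul_const (nu2 R₀ p.1)).const_add
      (γ p.1)).add_const ((h * p.2.2) • nu3 R₀ p.1)
  have hζ : HasDerivAt (fun t => Psih γ R₀ h (p.1, p.2.1, t)) (h • nu3 R₀ p.1) p.2.2 := by
    simpa [Psih] using (((hasDerivAt_id p.2.2).const_mul h).smul_const (nu3 R₀ p.1)).const_add
      (γ p.1 + (h * p.2.1) • nu2 R₀ p.1)
  rw [scaledGrad_eq_colMat hs hξ hζ, inv_smul_smul₀ hh, inv_smul_smul₀ hh, beamGradient,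
    beamCorrector, smul_colMat, smul_zero, ← colMat_mulVec_single (R₀ p.1), colMat_add_colMat,
    add_zero, add_zero, colMat_mulVec_single, nu2, nu3]

lemma scaledGrad_vh8 {v d₂ d₃ q : ℝ → Fin 3 → ℝ} {β : ℝ × ℝ × ℝ → Fin 3 → ℝ} (hh : h ≠ 0)
    (hv : DifferentiableAt ℝ v p.1) (hd₂ : DifferentiableAt ℝ d₂ p.1)
    (hd₃ : DifferentiableAt ℝ d₃ p.1) (hq : DifferentiableAt ℝ q p.1)
    (hβ : DifferentiableAt ℝ β p) :
    scaledGrad h (vh8 v d₂ d₃ q β h) p =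
      Rmat v d₂ d₃ p.1 + h • recoveryCorrector d₂ d₃ q β h p := by
  have hs : HasDerivAt (fun t => vh8 v d₂ d₃ q β h (t, p.2.1, p.2.2))
      (deriv v p.1 + h • (p.2.1 • deriv d₂ p.1 + p.2.2 • deriv d₃ p.1 + deriv q p.1 +
        h • fderiv ℝ β p (1, 0, 0))) p.1 := by
    have hsum := (((hv.hasDerivAt.add (hd₂.hasDerivAt.const_smul (h * p.2.1))).add
      (hd₃.hasDerivAt.const_smul (h * p.2.2))).add (hq.hasDerivAt.const_smul h)).add
        ((hasDerivAt_partial_one hβ).const_smul (h ^ 2))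
    exact hsum.congr_deriv (by module)
  have hξ : HasDerivAt (fun t => vh8 v d₂ d₃ q β h (p.1, t, p.2.2))
      (h • (d₂ p.1 + h • fderiv ℝ β p (0, 1, 0))) p.2.1 := by
    have hsum := ((((((hasDerivAt_id p.2.1).const_mul h).smul_const (d₂ p.1)).const_add
      (v p.1)).add_const ((h * p.2.2) • d₃ p.1)).add_const (h • q p.1)).add
        ((hasDerivAt_partial_two hβ).const_smul (h ^ 2))
    exact hsum.congr_deriv (by module)
  have hζ : HasDerivAt (fun t => vh8 v d₂ d₃ q β h (p.1, p.2.1, t))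
      (h • (d₃ p.1 + h • fderiv ℝ β p (0, 0, 1))) p.2.2 := by
    have hsum := (((((hasDerivAt_id p.2.2).const_mul h).smul_const (d₃ p.1)).const_add
      (v p.1 + (h * p.2.1) • d₂ p.1)).add_const (h • q p.1)).add
        ((hasDerivAt_partial_three hβ).const_smul (h ^ 2))
    exact hsum.congr_deriv (by module)
  rw [scaledGrad_eq_colMat hs hξ hζ, inv_smul_smul₀ hh, inv_smul_smul₀ hh, recoveryCorrector,
    smul_colMat, Rmat, colMat_add_colMat]

end Gradients

section Strain

variable {R₀ : ℝ → M3} {v d₂ d₃ q : ℝ → Fin 3 → ℝ} {β : ℝ × ℝ × ℝ → Fin 3 → ℝ}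

/-- The rescaled strain `E_h` of the recovery sequence: up to a rotation, `∇_h v⁽ʰ⁾ (∇_h Ψ⁽ʰ⁾)⁻¹`
equals `Id + h E_h`. As for the correctors, the expression makes sense up to `h = 0`. -/
def scaledStrain (R₀ : ℝ → M3) (v d₂ d₃ q : ℝ → Fin 3 → ℝ) (β : ℝ × ℝ × ℝ → Fin 3 → ℝ) (h : ℝ)
    (p : ℝ × ℝ × ℝ) : M3 :=
  (R₀ p.1 * (Rmat v d₂ d₃ p.1)ᵀ * recoveryCorrector d₂ d₃ q β h p - beamCorrector R₀ p) *
    (beamGradient R₀ h p)⁻¹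

lemma scaledStrain_zero {p : ℝ × ℝ × ℝ} (hR₀ : R₀ p.1 ∈ SO3) (hβ : DifferentiableAt ℝ β p) :
    scaledStrain R₀ v d₂ d₃ q β 0 p = Gqb R₀ v d₂ d₃ q β p := by
  have hinv : (beamGradient R₀ 0 p)⁻¹ = (R₀ p.1)ᵀ := by
    rw [beamGradient, zero_smul, add_zero, Matrix.inv_eq_left_inv hR₀.1]
  have hbeam : beamCorrector R₀ p = R₀ p.1 * ((R₀ p.1)ᵀ * beamCorrector R₀ p) := by
    rw [← mul_assoc, mul_transpose_self_of_mem_SO3 hR₀, one_mul]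
  rw [scaledStrain, Gqb, hinv, hbeam, mul_assoc (R₀ p.1), ← mul_sub,
    (hasDerivAt_partial_two hβ).deriv, (hasDerivAt_partial_three hβ).deriv, recoveryCorrector,
    beamCorrector, mul_colMat, mul_colMat, colMat_sub_colMat, Matrix.sub_mulVec,
    ← Matrix.mulVec_mulVec, ← Matrix.mulVec_mulVec, Rmat', colMat_mulVec]
  simp only [zero_smul, zero_add, add_zero, Matrix.mulVec_add, Matrix.mulVec_zero, sub_zero]
  rw [add_sub_right_comm]

lemma energyDensity_vh8_eq {W : M3 → ℝ} {γ : ℝ → Fin 3 → ℝ} {h : ℝ} {p : ℝ × ℝ × ℝ} (hh : h ≠ 0)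
    (hframe : ∀ F, ∀ R ∈ SO3, W (R * F) = W F) (hγ : DifferentiableAt ℝ γ p.1)
    (hR₀ : ∀ i j, DifferentiableAt ℝ (R₀ · i j) p.1) (hR₀SO : R₀ p.1 ∈ SO3)
    (hR₀e1 : R₀ p.1 *ᵥ Pi.single 0 1 = deriv γ p.1) (hv : DifferentiableAt ℝ v p.1)
    (hd₂ : DifferentiableAt ℝ d₂ p.1) (hd₃ : DifferentiableAt ℝ d₃ p.1)
    (hRSO : Rmat v d₂ d₃ p.1 ∈ SO3) (hq : DifferentiableAt ℝ q p.1)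
    (hβ : DifferentiableAt ℝ β p) (hdet : (beamGradient R₀ h p).det ≠ 0) :
    W (scaledGrad h (vh8 v d₂ d₃ q β h) p * (scaledGrad h (Psih γ R₀ h) p)⁻¹) *
        (scaledGrad h (Psih γ R₀ h) p).det =
      W (1 + h • scaledStrain R₀ v d₂ d₃ q β h p) * (beamGradient R₀ h p).det := by
  have hrot : R₀ p.1 * (Rmat v d₂ d₃ p.1)ᵀ * Rmat v d₂ d₃ p.1 = R₀ p.1 := by
    rw [mul_assoc, hRSO.1, mul_one]
  rw [scaledGrad_Psih hh hγ hR₀ hR₀e1, scaledGrad_vh8 hh hv hd₂ hd₃ hq hβ,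
    ← hframe _ _ (mul_transpose_mem_SO3 hR₀SO hRSO), beamGradient,
    mul_add_smul_mul_nonsing_inv hrot hdet.isUnit, scaledStrain, beamGradient]

lemma continuous_Rmat (hv : ContDiff ℝ 1 v) (hd₂ : Continuous d₂) (hd₃ : Continuous d₃) :
    Continuous (Rmat v d₂ d₃) :=
  continuous_colMat hv.continuous_deriv_one hd₂ hd₃

lemma continuous_beamCorrector (hR₀ : ∀ i j, ContDiff ℝ 1 (R₀ · i j)) :
    Continuous (beamCorrector R₀) := by
  have hR₀' : Continuous (R0' R₀) := continuous_matrix fun i j => (hR₀ i j).continuous_deriv_one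
  exact continuous_colMat ((hR₀'.comp continuous_fst).matrix_mulVec (by fun_prop))
    continuous_const continuous_const

lemma continuous_uncurry_beamGradient (hR₀ : ∀ i j, ContDiff ℝ 1 (R₀ · i j)) :
    Continuous (Function.uncurry (beamGradient R₀)) := by
  have hR₀cont : Continuous R₀ := continuous_matrix fun i j => (hR₀ i j).continuous
  exact (hR₀cont.comp (continuous_fst.comp continuous_snd)).add
    (continuous_fst.smul ((continuous_beamCorrector hR₀).comp continuous_snd))

lemma continuous_uncurry_recoveryCorrector (hd₂ : ContDiff ℝ 1 d₂) (hd₃ : ContDiff ℝ 1 d₃)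
    (hq : ContDiff ℝ 1 q) (hβ : ContDiff ℝ 1 β) :
    Continuous (Function.uncurry (recoveryCorrector d₂ d₃ q β)) := by
  have := hd₂.continuous_deriv_one
  have := hd₃.continuous_deriv_one
  have := hq.continuous_deriv_one
  have := hβ.continuous_fderiv one_ne_zero
  exact continuous_colMat (by fun_prop) (by fun_prop) (by fun_prop)

lemma continuousAt_uncurry_scaledStrain (hR₀ : ∀ i j, ContDiff ℝ 1 (R₀ · i j))
    (hv : ContDiff ℝ 1 v) (hd₂ : ContDiff ℝ 1 d₂) (hd₃ : ContDiff ℝ 1 d₃) (hq : ContDiff ℝ 1 q)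
    (hβ : ContDiff ℝ 1 β) {h : ℝ} {p : ℝ × ℝ × ℝ} (hdet : (beamGradient R₀ h p).det ≠ 0) :
    ContinuousAt (Function.uncurry (scaledStrain R₀ v d₂ d₃ q β)) (h, p) := by
  have hfst : Continuous fun x : ℝ × ℝ × ℝ × ℝ => x.2.1 := by fun_prop
  have hR₀cont : Continuous R₀ := continuous_matrix fun i j => (hR₀ i j).continuous
  have hrot := (hR₀cont.comp hfst).matrix_mul
    ((continuous_Rmat hv hd₂.continuous hd₃.continuous).comp hfst).matrix_transpose
  have hnum := (hrot.matrix_mul (continuous_uncurry_recoveryCorrector hd₂ hd₃ hq hβ)).sub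
    ((continuous_beamCorrector hR₀).comp continuous_snd)
  have hinv : ContinuousAt Inv.inv (beamGradient R₀ h p) := by
    refine continuousAt_matrix_inv _ ?_
    rw [Ring.inverse_eq_inv']
    exact continuousAt_inv₀ hdet
  exact hnum.continuousAt.mul (hinv.comp (f := Function.uncurry (beamGradient R₀)) (x := (h, p))
    (continuous_uncurry_beamGradient hR₀).continuousAt)

lemma aestronglyMeasurable_scaledStrain (hR₀ : ∀ i j, ContDiff ℝ 1 (R₀ · i j))
    (hv : ContDiff ℝ 1 v) (hd₂ : ContDiff ℝ 1 d₂) (hd₃ : ContDiff ℝ 1 d₃) (hq : ContDiff ℝ 1 q)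
    (hβ : ContDiff ℝ 1 β) {Ω : Set (ℝ × ℝ × ℝ)} (hΩ : MeasurableSet Ω) {μ : Measure (ℝ × ℝ × ℝ)}
    {h : ℝ} (hdet : ∀ p ∈ Ω, (beamGradient R₀ h p).det ≠ 0) :
    AEStronglyMeasurable (scaledStrain R₀ v d₂ d₃ q β h) (μ.restrict Ω) := by
  have : TopologicalSpace.PseudoMetrizableSpace M3 :=
    inferInstanceAs (TopologicalSpace.PseudoMetrizableSpace (Fin 3 → Fin 3 → ℝ))
  refine ContinuousOn.aestronglyMeasurable (fun p hp => ?_) hΩ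
  exact ((continuousAt_uncurry_scaledStrain hR₀ hv hd₂ hd₃ hq hβ (hdet p hp)).comp
    (f := fun p => (h, p)) (by fun_prop)).continuousWithinAt

lemma det_beamGradient_zero {p : ℝ × ℝ × ℝ} (hR₀SO : R₀ p.1 ∈ SO3) :
    (beamGradient R₀ 0 p).det = 1 := by
  simp [beamGradient, hR₀SO.2]

lemma tendsto_det_beamGradient (hR₀ : ∀ i j, ContDiff ℝ 1 (R₀ · i j)) {p : ℝ × ℝ × ℝ}
    (hR₀SO : R₀ p.1 ∈ SO3) : Tendsto (fun h => (beamGradient R₀ h p).det) (𝓝 0) (𝓝 1) :=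
  ((continuous_uncurry_beamGradient hR₀).matrix_det.comp (f := fun h => (h, p))
    (by fun_prop)).tendsto' 0 1 (det_beamGradient_zero hR₀SO)

lemma tendsto_scaledStrain (hR₀ : ∀ i j, ContDiff ℝ 1 (R₀ · i j)) (hv : ContDiff ℝ 1 v)
    (hd₂ : ContDiff ℝ 1 d₂) (hd₃ : ContDiff ℝ 1 d₃) (hq : ContDiff ℝ 1 q) (hβ : ContDiff ℝ 1 β)
    {p : ℝ × ℝ × ℝ} (hR₀SO : R₀ p.1 ∈ SO3) :
    Tendsto (scaledStrain R₀ v d₂ d₃ q β · p) (𝓝 0) (𝓝 (Gqb R₀ v d₂ d₃ q β p)) := by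
  rw [← scaledStrain_zero hR₀SO (hβ.differentiable one_ne_zero p)]
  exact ((continuousAt_uncurry_scaledStrain hR₀ hv hd₂ hd₃ hq hβ
    (by simp [det_beamGradient_zero hR₀SO])).comp (f := fun h => (h, p)) (by fun_prop)).tendsto

lemma eventually_forall_det_beamGradient_ne_zero (hR₀ : ∀ i j, ContDiff ℝ 1 (R₀ · i j))
    {K : Set (ℝ × ℝ × ℝ)} (hK : IsCompact K) (hR₀SO : ∀ p ∈ K, R₀ p.1 ∈ SO3) :
    ∀ᶠ h in 𝓝 0, ∀ p ∈ K, (beamGradient R₀ h p).det ≠ 0 := by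
  refine hK.eventually_forall_of_forall_eventually fun p hp => ?_
  have hdet := (continuous_uncurry_beamGradient hR₀).matrix_det
  refine (hdet.tendsto (0, p)).eventually_ne ?_
  simp [Function.uncurry, det_beamGradient_zero (hR₀SO p hp)]

lemma tendsto_integral_energy_scaledStrain {Ω : Set (ℝ × ℝ × ℝ)} (hΩ : MeasurableSet Ω)
    (hΩbdd : Bornology.IsBounded Ω) (hR₀ : ∀ i j, ContDiff ℝ 1 (R₀ · i j))
    (hR₀SO : ∀ p ∈ closure Ω, R₀ p.1 ∈ SO3) (hv : ContDiff ℝ 1 v) (hd₂ : ContDiff ℝ 1 d₂)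
    (hd₃ : ContDiff ℝ 1 d₃) (hq : ContDiff ℝ 1 q) (hβ : ContDiff ℝ 1 β)
    {W : ℝ × ℝ × ℝ → M3 → ℝ} (hWmeas : ∀ F, Measurable fun p => W p F) {δ C : ℝ} (hδ : 0 < δ)
    (hC : 0 ≤ C) (hWC2 : ∀ᵐ p ∂volume.restrict Ω, ContDiffOn ℝ 2 (W p) (ball 1 δ))
    (hWbound : ∀ᵐ p ∂volume.restrict Ω, ∀ F ∈ ball (1 : M3) δ, ∀ G,
      |iteratedFDeriv ℝ 2 (W p) F ![G, G]| ≤ C * ‖G‖ ^ 2)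
    (hW0 : ∀ᵐ p ∂volume.restrict Ω, W p 1 = 0)
    (hW1 : ∀ᵐ p ∂volume.restrict Ω, fderiv ℝ (W p) 1 = 0) :
    Tendsto (fun h : ℝ => 1 / h ^ 2 * ∫ p in Ω,
        W p (1 + h • scaledStrain R₀ v d₂ d₃ q β h p) * (beamGradient R₀ h p).det)
      (𝓝[≠] 0) (𝓝 (1 / 2 * ∫ p in Ω, Q3 W p (Gqb R₀ v d₂ d₃ q β p))) := by
  have hK : IsCompact (closure Ω) := hΩbdd.isCompact_closure
  have : IsFiniteMeasure (volume.restrict Ω) := ⟨by simpa using hΩbdd.measure_lt_top⟩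
  have hΩSO {p : ℝ × ℝ × ℝ} (hp : p ∈ Ω) : R₀ p.1 ∈ SO3 := hR₀SO p (subset_closure hp)
  have hJ := (continuous_uncurry_beamGradient hR₀).matrix_det
  obtain ⟨M, hM⟩ := exists_eventually_forall_norm_le_of_isCompact hK fun p hp =>
    continuousAt_uncurry_scaledStrain hR₀ hv hd₂ hd₃ hq hβ (h := 0) (p := p)
      (by simp [det_beamGradient_zero (hR₀SO p hp)])
  obtain ⟨N, hN⟩ := exists_eventually_forall_norm_le_of_isCompact hK fun p _ =>
    hJ.continuousAt (x := (0, p))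
  have hEmeas : ∀ᶠ h in 𝓝 0,
      AEStronglyMeasurable (scaledStrain R₀ v d₂ d₃ q β h) (volume.restrict Ω) :=
    (eventually_forall_det_beamGradient_ne_zero hR₀ hK hR₀SO).mono fun h hdet =>
      aestronglyMeasurable_scaledStrain hR₀ hv hd₂ hd₃ hq hβ hΩ fun p hp =>
        hdet p (subset_closure hp)
  have hJmeas (h : ℝ) :
      AEStronglyMeasurable (fun p => (beamGradient R₀ h p).det) (volume.restrict Ω) :=
    (hJ.comp (f := fun p => (h, p)) (by fun_prop)).aestronglyMeasurable
  have hlim := tendsto_integral_rescaled_energy (E₀ := Gqb R₀ v d₂ d₃ q β) (J₀ := 1)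
    hδ hC hWmeas hWC2 hWbound hW0 hW1 (hEmeas.filter_mono nhdsWithin_le_nhds)
    ((hM.filter_mono nhdsWithin_le_nhds).mono fun h hh =>
      ae_restrict_of_forall_mem hΩ fun p hp => hh p (subset_closure hp))
    (ae_restrict_of_forall_mem hΩ fun p hp =>
      (tendsto_scaledStrain hR₀ hv hd₂ hd₃ hq hβ (hΩSO hp)).mono_left nhdsWithin_le_nhds)
    (.of_forall hJmeas)
    ((hN.filter_mono nhdsWithin_le_nhds).mono fun h hh =>
      ae_restrict_of_forall_mem hΩ fun p hp => hh p (subset_closure hp))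
    (ae_restrict_of_forall_mem hΩ fun p hp =>
      (tendsto_det_beamGradient hR₀ (hΩSO hp)).mono_left nhdsWithin_le_nhds)
  simpa [Q3] using hlim

end Strain

theorem recovery_sequence_energy_limit_general {Ω : Set (ℝ × ℝ × ℝ)} (hΩ : MeasurableSet Ω)
    (hΩbdd : Bornology.IsBounded Ω) {γ : ℝ → Fin 3 → ℝ} (hγ : Differentiable ℝ γ)
    {R₀ : ℝ → M3} (hR₀ : ∀ i j, ContDiff ℝ 1 (R₀ · i j)) (hR₀SO : ∀ p ∈ Ω, R₀ p.1 ∈ SO3)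
    (hR₀e1 : ∀ p ∈ Ω, R₀ p.1 *ᵥ Pi.single 0 1 = deriv γ p.1)
    {W : ℝ × ℝ × ℝ → M3 → ℝ} (hWnn : ∀ p F, 0 ≤ W p F)
    (hWmeas : ∀ F, Measurable fun p => W p F) {δ C : ℝ} (hδ : 0 < δ) (hC : 0 ≤ C)
    (hWC2 : ∀ᵐ p ∂volume.restrict Ω, ContDiffOn ℝ 2 (W p) {F | distSO3 F < δ})
    (hWbound : ∀ᵐ p ∂volume.restrict Ω, ∀ F, distSO3 F < δ → ∀ G,
      |iteratedFDeriv ℝ 2 (W p) F ![G, G]| ≤ C * frob3 G ^ 2)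
    (hframe : ∀ᵐ p ∂volume.restrict Ω, ∀ F, ∀ R ∈ SO3, W p (R * F) = W p F)
    (hW0 : ∀ᵐ p ∂volume.restrict Ω, W p 1 = 0)
    {v d₂ d₃ q : ℝ → Fin 3 → ℝ} (hv : ContDiff ℝ 2 v) (hd₂ : ContDiff ℝ 1 d₂)
    (hd₃ : ContDiff ℝ 1 d₃) (hRSO : ∀ p ∈ Ω, Rmat v d₂ d₃ p.1 ∈ SO3) (hq : ContDiff ℝ 1 q)
    {β : ℝ × ℝ × ℝ → Fin 3 → ℝ} (hβ : ContDiff ℝ 1 β) :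
    Tendsto (fun h : ℝ => 1 / h ^ 2 * ∫ p in Ω,
        W p (scaledGrad h (vh8 v d₂ d₃ q β h) p * (scaledGrad h (Psih γ R₀ h) p)⁻¹) *
          (scaledGrad h (Psih γ R₀ h) p).det)
      (𝓝[≠] 0) (𝓝 (1 / 2 * ∫ p in Ω, Q3 W p (Gqb R₀ v d₂ d₃ q β p))) := by
  have hv1 : ContDiff ℝ 1 v := hv.of_le one_le_two
  have hR₀cont : Continuous R₀ := continuous_matrix fun i j => (hR₀ i j).continuous
  have hR₀SO' : ∀ p ∈ closure Ω, R₀ p.1 ∈ SO3 :=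
    closure_minimal hR₀SO (isClosed_SO3.preimage (hR₀cont.comp continuous_fst))
  have hball := ball_one_subset_setOf_distSO3_lt δ
  have hW1 : ∀ᵐ p ∂volume.restrict Ω, fderiv ℝ (W p) 1 = 0 := hW0.mono fun p hp =>
    IsLocalMin.fderiv_eq_zero (.of_forall fun F => hp ▸ hWnn p F)
  refine (tendsto_integral_energy_scaledStrain hΩ hΩbdd hR₀ hR₀SO' hv1 hd₂ hd₃ hq hβ hWmeas hδ hC
    (hWC2.mono fun p hp => hp.mono hball)
    (hWbound.mono fun p hp F hF G => frob3_eq_norm G ▸ hp F (hball hF) G) hW0 hW1).congr' ?_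
  filter_upwards [self_mem_nhdsWithin, nhdsWithin_le_nhds
    (eventually_forall_det_beamGradient_ne_zero hR₀ hΩbdd.isCompact_closure hR₀SO')]
    with h (hh : h ≠ 0) hdet
  congr 1
  refine integral_congr_ae ?_
  filter_upwards [hframe, ae_restrict_mem hΩ] with p hframe hp
  exact (energyDensity_vh8_eq hh hframe (hγ _) (fun i j => (hR₀ i j).differentiable one_ne_zero _)
    (hR₀SO p hp) (hR₀e1 p hp) (hv1.differentiable one_ne_zero _)
    (hd₂.differentiable one_ne_zero _) (hd₃.differentiable one_ne_zero _) (hRSO p hp)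
    (hq.differentiable one_ne_zero _) (hβ.differentiable one_ne_zero _)
    (hdet p (subset_closure hp))).symm

theorem recovery_sequence_energy_limit
    (L : ℝ) (hL : 0 < L)
    (γ : ℝ → Fin 3 → ℝ) (hγ : ContDiff ℝ 2 γ)
    (harc : ∀ s ∈ Icc (0:ℝ) L, enorm3 (deriv γ s) = 1)
    (hγinj : InjOn γ (Icc (0:ℝ) L))
    (R₀ : ℝ → M3) (hR₀C1 : ∀ i j, ContDiff ℝ 1 fun s => R₀ s i j)
    (hR₀SO : ∀ s ∈ Icc (0:ℝ) L, R₀ s ∈ SO3)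
    (hR₀e1 : ∀ s ∈ Icc (0:ℝ) L, (R₀ s).mulVec (Pi.single 0 1) = deriv γ s)
    (Dset : Set (ℝ × ℝ)) (hDopen : IsOpen Dset) (hDconn : IsConnected Dset)
    (hDbdd : Bornology.IsBounded Dset) (hDvol : volume Dset = 1)
    (W : ℝ × ℝ × ℝ → M3 → ℝ) (hWnn : ∀ z F, 0 ≤ W z F)
    (hWmeas : ∀ F, Measurable fun z => W z F)
    (δ : ℝ) (hδ : 0 < δ)
    (hC2 : ∀ᵐ z ∂(volume.restrict (Ioo (0:ℝ) L ×ˢ Dset)),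
      ContDiffOn ℝ 2 (W z) {F : M3 | distSO3 F < δ})
    (C₁ : ℝ) (hC₁ : 0 < C₁)
    (hbound : ∀ᵐ z ∂(volume.restrict (Ioo (0:ℝ) L ×ˢ Dset)),
      ∀ F : M3, distSO3 F < δ → ∀ G : M3,
        |iteratedFDeriv ℝ 2 (W z) F ![G, G]| ≤ C₁ * frob3 G ^ 2)
    (hframe : ∀ᵐ z ∂(volume.restrict (Ioo (0:ℝ) L ×ˢ Dset)),
      ∀ F : M3, ∀ R ∈ SO3, W z (R * F) = W z F)
    (hWzero : ∀ᵐ z ∂(volume.restrict (Ioo (0:ℝ) L ×ˢ Dset)), ∀ R ∈ SO3, W z R = 0)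
    (v d₂ d₃ : ℝ → Fin 3 → ℝ)
    (hv : ContDiff ℝ 2 v) (hd₂ : ContDiff ℝ 1 d₂) (hd₃ : ContDiff ℝ 1 d₃)
    (hRSO : ∀ s ∈ Icc (0:ℝ) L, Rmat v d₂ d₃ s ∈ SO3)
    (q : ℝ → Fin 3 → ℝ) (hq : ContDiff ℝ 1 q)
    (β : ℝ × ℝ × ℝ → Fin 3 → ℝ) (hβ : ContDiff ℝ 1 β) :
    Filter.Tendsto
      (fun h : ℝ => (1 / h ^ 2) *
        ∫ p in Ioo (0:ℝ) L ×ˢ Dset,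
          W p (scaledGrad h (vh8 v d₂ d₃ q β h) p * (scaledGrad h (Psih γ R₀ h) p)⁻¹) *
            (scaledGrad h (Psih γ R₀ h) p).det)
      (nhdsWithin 0 (Ioi 0))
      (nhds ((1 / 2) *
        ∫ p in Ioo (0:ℝ) L ×ˢ Dset, Q3 W p (Gqb R₀ v d₂ d₃ q β p))) := by
  have hmem {p : ℝ × ℝ × ℝ} (hp : p ∈ Ioo (0 : ℝ) L ×ˢ Dset) : p.1 ∈ Icc 0 L :=
    Ioo_subset_Icc_self hp.1
  exact (recovery_sequence_energy_limit_general (measurableSet_Ioo.prod hDopen.measurableSet)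
    ((isBounded_Ioo 0 L).prod hDbdd) (hγ.differentiable two_ne_zero) hR₀C1
    (fun _ hp => hR₀SO _ (hmem hp)) (fun _ hp => hR₀e1 _ (hmem hp)) hWnn hWmeas hδ hC₁.le hC2
    hbound hframe (hWzero.mono fun _ hW => hW 1 one_mem_SO3) hv hd₂ hd₃
    (fun _ hp => hRSO _ (hmem hp)) hq hβ).mono_left (nhdsGT_le_nhdsNE 0)
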